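/- Let q be a prime power and let C be an absolutely irreducible plane projective curve of degree q+1 defined over GF(q^2). If the number N of GF(q^2)-rational points of C satisfies N < q^3 + 1, then N <= q(q+1)^2/2. -/

import Mathlib

open MvPolynomial Module

/-- The set of points of the projective subspace of `PG(n-1, F)` determined by
the linear subspace `W` of `F^n`. -/
def projPts {F : Type} [Field F] {n : ℕ} (W : Submodule F (Fin n → F)) :
    Set (Projectivization F (Fin n → F)) :=
  {P | P.submodule ≤ W}

/-- The set of `F`-rational points of the hypersurface of `PG(n-1, F)` defined by the
homogeneous polynomial `f`. -/
def hypersurfacePts {F : Type} [Field F] {n : ℕ} (f : MvPolynomial (Fin n) F) :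
    Set (Projectivization F (Fin n → F)) :=
  {P | MvPolynomial.eval P.rep f = 0}



section CurveHelpers

variable {F : Type} [Field F]

/-- restriction of a ternary polynomial to the parametrized line `A + t B` -/
noncomputable def restr (A B : Fin 3 → F) : MvPolynomial (Fin 3) F →ₐ[F] Polynomial F :=
  MvPolynomial.aeval (fun i => Polynomial.C (A i) + Polynomial.X * Polynomial.C (B i))

lemma restr_X (A B : Fin 3 → F) (i : Fin 3) :
    restr A B (X i) = Polynomial.C (A i) + Polynomial.X * Polynomial.C (B i) := by
  simp [restr]

lemma restr_C (A B : Fin 3 → F) (a : F) : restr A B (C a) = Polynomial.C a := by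
  simp [restr]

lemma restr_eval (A B : Fin 3 → F) (W : MvPolynomial (Fin 3) F) (t : F) :
    (restr A B W).eval t = MvPolynomial.eval (A + t • B) W := by
  induction W using MvPolynomial.induction_on with
  | C a => simp
  | add p q hp hq => simp [hp, hq]
  | mul_X p i hp =>
    rw [map_mul, Polynomial.eval_mul, hp, restr_X]
    simp [mul_comm t]

lemma restr_derivative (A B : Fin 3 → F) (W : MvPolynomial (Fin 3) F) :
    Polynomial.derivative (restr A B W) =
      ∑ i, Polynomial.C (B i) * restr A B (pderiv i W) := by
  induction W using MvPolynomial.induction_on with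
  | C a => simp
  | add p q hp hq => simp [hp, hq, mul_add, Finset.sum_add_distrib]
  | mul_X p i hp =>
    have h1 : ∀ j, restr A B (pderiv j (p * X i)) = restr A B (pderiv j p) * restr A B (X i) +
        restr A B p * (if j = i then 1 else 0) := by
      intro j
      rw [pderiv_mul, map_add, map_mul, map_mul, pderiv_X]
      congr 2
      by_cases hj : j = i
      · subst hj; simp
      · simp [hj, Ne.symm hj]
    simp only [h1, mul_add, Finset.sum_add_distrib]
    rw [map_mul, Polynomial.derivative_mul, hp, Finset.sum_mul]
    refine congrArg₂ (· + ·) ?_ ?_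
    · apply Finset.sum_congr rfl; intros; ring
    · rw [Finset.sum_eq_single i]
      · rw [restr_X]; simp; ring
      · intro b _ hb; simp [hb]
      · simp

lemma restr_euler (A B : Fin 3 → F) (W : MvPolynomial (Fin 3) F) (n : ℕ)
    (h : W.IsHomogeneous n) :
    ∑ i, (Polynomial.C (A i) + Polynomial.X * Polynomial.C (B i)) * restr A B (pderiv i W)
      = n • restr A B W := by
  have := congrArg (restr A B) h.sum_X_mul_pderiv
  simpa [restr_X] using this

/-- The Stöhr-Voloch polynomial. -/
noncomputable def svPoly (Q : ℕ) (f : MvPolynomial (Fin 3) F) : MvPolynomial (Fin 3) F :=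
  ∑ i, X i ^ Q * pderiv i f

lemma restr_svPoly [Fintype F] (A B : Fin 3 → F) (f : MvPolynomial (Fin 3) F) (q : ℕ)
    (h : f.IsHomogeneous (q + 1)) (hq : (q : F) = 0) :
    restr A B (svPoly (Fintype.card F) f) = restr A B f +
      (Polynomial.X ^ (Fintype.card F) - Polynomial.X) * Polynomial.derivative (restr A B f) := by
  have h1 := restr_euler A B f _ h
  have h2 : ((q + 1 : ℕ) • restr A B f) = restr A B f := by
    have : ((q + 1 : ℕ) : Polynomial F) = 1 := by
      rw [← map_natCast Polynomial.C]; simp [hq]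
    rw [nsmul_eq_mul, this, one_mul]
  rw [h2] at h1
  rw [restr_derivative]
  conv_rhs => rw [← h1]
  rw [Finset.mul_sum, ← Finset.sum_add_distrib, svPoly, map_sum]
  apply Finset.sum_congr rfl
  intro i _
  rw [map_mul, map_pow, restr_X, ← FiniteField.expand_card]
  simp
  ring

lemma finrank_hom (n : ℕ) :
    2 * Module.finrank F (homogeneousSubmodule (Fin 3) F n) = (n + 1) * (n + 2) := by
  classical
  have e : homogeneousSubmodule (Fin 3) F n ≃ₗ[F] ({d : Fin 3 →₀ ℕ | d.degree = n} →₀ F) :=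
    (LinearEquiv.ofEq _ _ (homogeneousSubmodule_eq_finsupp_supported (Fin 3) F n)).trans
      (AddMonoidAlgebra.supportedEquivFinsupp _)
  have hs : {d : Fin 3 →₀ ℕ | d.degree = n} =
      ((Finset.univ : Finset (Fin 3)).finsuppAntidiag n : Set (Fin 3 →₀ ℕ)) := by
    ext d
    simp [Finset.mem_finsuppAntidiag, Finsupp.degree_eq_sum]
  rw [hs] at e
  rw [e.finrank_eq, Module.finrank_finsupp_self]
  simp only [Finset.coe_sort_coe, Fintype.card_coe]
  rw [Finset.card_finsuppAntidiag_nat_eq_choose]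
  simp only [Finset.card_univ, Fintype.card_fin]
  have : 3 + n - 1 = n + 2 := by omega
  rw [this, Nat.choose_symm_add, Nat.choose_two_right]
  rw [Nat.mul_div_cancel' (by have := Nat.even_mul_pred_self (n+2); exact this.two_dvd)]
  simp; ring

instance finite_hom (n : ℕ) : Module.Finite F (homogeneousSubmodule (Fin 3) F n) :=
  Module.Finite.iff_fg.mpr (homogeneousSubmodule_fg _ _ n)

lemma hom_of_mul {f c : MvPolynomial (Fin 3) F} {d m : ℕ} (hf : f.IsHomogeneous d) (hf0 : f ≠ 0)
    (h : (f * c).IsHomogeneous (d + m)) : c.IsHomogeneous m := by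
  have h1 : homogeneousComponent (d + m) (f * c) = f * homogeneousComponent m c := by
    let : GradedAlgebra (homogeneousSubmodule (Fin 3) F) := gradedAlgebra
    have := DirectSum.coe_decompose_mul_add_of_left_mem
      (homogeneousSubmodule (Fin 3) F) (i := d) (j := m) (a := f) (b := c) hf
    rw [← decomposition.decompose'_apply, ← decomposition.decompose'_apply]
    exact this
  rw [homogeneousComponent_of_mem h, if_pos rfl] at h1
  have := mul_left_cancel₀ hf0 h1
  rw [this]
  exact homogeneousComponent_isHomogeneous _ _

lemma bezout_dim {f g : MvPolynomial (Fin 3) F} {d e m : ℕ} (hf : f.IsHomogeneous d)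
    (hg : g.IsHomogeneous e) (hirr : Irreducible f) (hfg : ¬ f ∣ g)
    {V : Type} [AddCommGroup V] [Module F V] [Module.Finite F V]
    (T : MvPolynomial (Fin 3) F →ₗ[F] V) (hTf : ∀ w, T (f * w) = 0) (hTg : ∀ w, T (g * w) = 0)
    (hT : ∀ v, ∃ w : MvPolynomial (Fin 3) F, w.IsHomogeneous (d + e + m) ∧ T w = v) :
    Module.finrank F V ≤ d * e := by
  let S := fun n => homogeneousSubmodule (Fin 3) F n
  let T' : S (d + e + m) →ₗ[F] V := T.domRestrict _
  have hT' : LinearMap.range T' = ⊤ := by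
    rw [LinearMap.range_eq_top]
    intro v
    obtain ⟨w, hw, rfl⟩ := hT v
    exact ⟨⟨w, hw⟩, rfl⟩
  let φ : (S (e + m) × S (d + m)) →ₗ[F] S (d + e + m) :=
    { toFun := fun x => ⟨f * x.1.1 + g * x.2.1, by
        apply (homogeneousSubmodule (Fin 3) F (d + e + m)).add_mem
        · have := hf.mul x.1.2; rwa [← add_assoc] at this
        · have := hg.mul x.2.2; rwa [← add_assoc, add_comm e d] at this⟩
      map_add' := by intro x y; ext1; simp; ring
      map_smul' := by intro c x; ext1; simp [smul_add] }
  let ψ : S m →ₗ[F] (S (e + m) × S (d + m)) :=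
    { toFun := fun x => (⟨-(g * x.1), (homogeneousSubmodule (Fin 3) F (e + m)).neg_mem (hg.mul x.2)⟩,
        ⟨f * x.1, hf.mul x.2⟩)
      map_add' := by intro x y; ext1 <;> ext1 <;> simp <;> ring
      map_smul' := by intro c x; ext1 <;> ext1 <;> simp }
  have hk : LinearMap.ker φ ≤ LinearMap.range ψ := by
    rintro ⟨a, b⟩ hab
    have h0 : f * a.1 + g * b.1 = 0 := congrArg Subtype.val hab
    have hdvd : f ∣ g * b.1 := ⟨-a.1, by linear_combination h0⟩
    obtain ⟨c, hc⟩ := (hirr.prime.dvd_or_dvd hdvd).resolve_left hfg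
    have hcm : c.IsHomogeneous m := by
      apply hom_of_mul hf hirr.ne_zero
      rw [← hc]; exact b.2
    refine ⟨⟨c, hcm⟩, ?_⟩
    have ha : a.1 = -(g * c) := by
      apply mul_left_cancel₀ hirr.ne_zero
      rw [hc] at h0
      linear_combination h0
    ext1 <;> ext1
    · exact ha.symm
    · exact hc.symm
  have hr : LinearMap.range φ ≤ LinearMap.ker T' := by
    rintro _ ⟨⟨a, b⟩, rfl⟩
    change T (f * a.1 + g * b.1) = 0
    rw [map_add, hTf, hTg, add_zero]
  have e1 := LinearMap.finrank_range_add_finrank_ker T'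
  have e2 := LinearMap.finrank_range_add_finrank_ker φ
  have e3 := Submodule.finrank_mono hr
  have e4 := (Submodule.finrank_mono hk).trans (LinearMap.finrank_range_le ψ)
  rw [hT', finrank_top] at e1
  rw [Module.finrank_prod] at e2
  have d1 := finrank_hom (F := F) (d + e + m)
  have d2 := finrank_hom (F := F) (e + m)
  have d3 := finrank_hom (F := F) (d + m)
  have d4 := finrank_hom (F := F) m
  simp only [S] at *
  nlinarith


/-- the linear form attached to a functional -/
noncomputable def linForm (φ : (Fin 3 → F) →ₗ[F] F) : MvPolynomial (Fin 3) F :=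
  ∑ i, C (φ (Pi.single i 1)) * X i

lemma linForm_hom (φ : (Fin 3 → F) →ₗ[F] F) : (linForm φ).IsHomogeneous 1 := by
  apply IsHomogeneous.sum
  intro i _
  simpa using (isHomogeneous_C (Fin 3) (φ (Pi.single i 1))).mul (isHomogeneous_X F i)

lemma apply_eq_sum (φ : (Fin 3 → F) →ₗ[F] F) (v : Fin 3 → F) :
    φ v = ∑ i, φ (Pi.single i 1) * v i := by
  rw [LinearMap.pi_apply_eq_sum_univ φ v]
  apply Finset.sum_congr rfl
  intro i _
  rw [smul_eq_mul, mul_comm]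
  congr 2
  ext j
  simp [Pi.single_apply, eq_comm]

lemma restr_linForm (A B : Fin 3 → F) (φ : (Fin 3 → F) →ₗ[F] F) :
    restr A B (linForm φ) = Polynomial.C (φ A) + Polynomial.X * Polynomial.C (φ B) := by
  rw [apply_eq_sum φ A, apply_eq_sum φ B, linForm, map_sum]
  simp only [map_mul, restr_C, restr_X, map_sum, Finset.mul_sum]
  rw [← Finset.sum_add_distrib]
  apply Finset.sum_congr rfl
  intros
  ring

lemma exists_dual_pair {A B : Fin 3 → F} (h : LinearIndependent F ![A, B]) :
    ∃ m τ : (Fin 3 → F) →ₗ[F] F, m A = 1 ∧ m B = 0 ∧ τ A = 0 ∧ τ B = 1 := by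
  obtain ⟨g, hg⟩ := LinearMap.exists_leftInverse_of_injective
    (Fintype.linearCombination F ![A, B])
    (LinearMap.ker_eq_bot.mpr (linearIndependent_iff_injective_fintypeLinearCombination.mp h))
  have hA : g A = Pi.single 0 1 := by
    have := LinearMap.congr_fun hg (Pi.single 0 1)
    simpa [Fintype.linearCombination_apply] using this
  have hB : g B = Pi.single 1 1 := by
    have := LinearMap.congr_fun hg (Pi.single 1 1)
    simpa [Fintype.linearCombination_apply] using this
  refine ⟨LinearMap.proj 0 ∘ₗ g, LinearMap.proj 1 ∘ₗ g, ?_⟩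
  simp [hA, hB]

lemma exists_lift {A B : Fin 3 → F} (h : LinearIndependent F ![A, B]) (p : Polynomial F) (n : ℕ)
    (hn : p.natDegree ≤ n) :
    ∃ w : MvPolynomial (Fin 3) F, w.IsHomogeneous n ∧ restr A B w = p := by
  obtain ⟨m, τ, h1, h2, h3, h4⟩ := exists_dual_pair h
  refine ⟨∑ j ∈ Finset.range (n + 1), C (p.coeff j) * (linForm m ^ (n - j) * linForm τ ^ j), ?_, ?_⟩
  · apply IsHomogeneous.sum
    intro j hj
    have hj' : j ≤ n := by simpa [Nat.lt_succ_iff] using hj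
    have := (isHomogeneous_C (Fin 3) (p.coeff j)).mul
      (((linForm_hom m).pow (n - j)).mul ((linForm_hom τ).pow j))
    convert this using 1
    omega
  · simp only [map_sum, map_mul, map_pow, restr_linForm, restr_C, h1, h2, h3, h4]
    conv_rhs => rw [p.as_sum_range_C_mul_X_pow' (Nat.lt_succ_of_le hn)]
    simp

lemma count_le {ι : Type} [Fintype ι] [DecidableEq ι] {f g : MvPolynomial (Fin 3) F} {d e r : ℕ}
    (hf : f.IsHomogeneous d) (hg : g.IsHomogeneous e) (hirr : Irreducible f) (hfg : ¬ f ∣ g)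
    (A B : ι → Fin 3 → F) (hAB : ∀ i, LinearIndependent F ![A i, B i])
    (h : ι → Polynomial F) (h0 : ∀ i, h i ≠ 0)
    (hhf : ∀ i, h i ∣ restr (A i) (B i) f) (hhg : ∀ i, h i ∣ restr (A i) (B i) g)
    (E : ι → MvPolynomial (Fin 3) F) (hE : ∀ i, (E i).IsHomogeneous r)
    (hEk : ∀ i k, k ≠ i → h k ∣ restr (A k) (B k) (E i))
    (hEi : ∀ i, IsCoprime (h i) (restr (A i) (B i) (E i))) :
    ∑ i, (h i).natDegree ≤ d * e := by
  let T : MvPolynomial (Fin 3) F →ₗ[F] (∀ i, AdjoinRoot (h i)) :=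
    LinearMap.pi fun i => (AdjoinRoot.mkₐ (h i)).toLinearMap ∘ₗ (restr (A i) (B i)).toLinearMap
  have hTi : ∀ w i, T w i = AdjoinRoot.mk (h i) (restr (A i) (B i) w) := fun w i => rfl
  have : ∀ i, Module.Finite F (AdjoinRoot (h i)) := fun i =>
    (AdjoinRoot.powerBasis (h0 i)).finite
  have hfr : Module.finrank F (∀ i, AdjoinRoot (h i)) = ∑ i, (h i).natDegree := by
    rw [Module.finrank_pi_fintype]
    apply Finset.sum_congr rfl
    intro i _
    rw [(AdjoinRoot.powerBasis (h0 i)).finrank, AdjoinRoot.powerBasis_dim]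
  rw [← hfr]
  set M := ∑ i, (h i).natDegree with hM
  refine bezout_dim (m := r + M) hf hg hirr hfg T ?_ ?_ ?_
  · intro w
    ext i
    rw [hTi, map_mul, Pi.zero_apply, AdjoinRoot.mk_eq_zero]
    exact (hhf i).mul_right _
  · intro w
    ext i
    rw [hTi, map_mul, Pi.zero_apply, AdjoinRoot.mk_eq_zero]
    exact (hhg i).mul_right _
  · intro v
    have key : ∀ i, ∃ w : MvPolynomial (Fin 3) F, w.IsHomogeneous (d + e + (r + M)) ∧
        T w = Pi.single i (v i) := by
      intro i
      obtain ⟨p, hp⟩ := AdjoinRoot.mk_surjective (v i)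
      obtain ⟨a, b, hab⟩ := hEi i
      have hdeg : ((p * b) % h i).natDegree ≤ d + e + M := by
        have h1 : (h i).natDegree ≤ M :=
          Finset.single_le_sum (f := fun i => (h i).natDegree) (fun _ _ => Nat.zero_le _)
            (Finset.mem_univ i)
        have h2 : ((p * b) % h i).natDegree ≤ (h i).natDegree :=
          Polynomial.natDegree_le_natDegree (EuclideanDomain.mod_lt _ (h0 i)).le
        omega
      obtain ⟨w, hw, hw'⟩ := exists_lift (hAB i) _ _ hdeg
      refine ⟨E i * w, ?_, ?_⟩
      · have := (hE i).mul hw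
        convert this using 1
        ring
      · ext k
        rw [hTi]
        by_cases hk : k = i
        · subst hk
          rw [Pi.single_eq_same, ← hp, map_mul, hw', AdjoinRoot.mk_eq_mk]
          have e1 := EuclideanDomain.div_add_mod (p * b) (h k)
          refine ⟨-(a * p) - restr (A k) (B k) (E k) * (p * b / h k), ?_⟩
          linear_combination p * hab + restr (A k) (B k) (E k) * e1
        · rw [Pi.single_eq_of_ne hk, map_mul, AdjoinRoot.mk_eq_zero]
          exact (hEk i k hk).mul_right _
    choose w hw hw' using key
    refine ⟨∑ i, w i, IsHomogeneous.sum _ _ _ fun i _ => hw i, ?_⟩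
    rw [map_sum]
    simp only [hw']
    exact Finset.univ_sum_single v

lemma svPoly_hom {f : MvPolynomial (Fin 3) F} {q : ℕ} (h : f.IsHomogeneous (q + 1)) (Q : ℕ) :
    (svPoly Q f).IsHomogeneous (Q + q) := by
  apply IsHomogeneous.sum
  intro i _
  simpa using ((isHomogeneous_X F i).pow Q).mul (h.pderiv (i := i))

lemma eval_smul_hom {f : MvPolynomial (Fin 3) F} {n : ℕ} (h : f.IsHomogeneous n) (c : F)
    (v : Fin 3 → F) : MvPolynomial.eval (c • v) f = c ^ n * MvPolynomial.eval v f := by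
  rw [eval_eq, eval_eq, Finset.mul_sum]
  apply Finset.sum_congr rfl
  intro s hs
  have h1 : s.degree = n := by
    by_contra hne
    exact (mem_support_iff.mp hs) (h.coeff_eq_zero hne)
  have h2 : ∏ i ∈ s.support, c ^ s i = c ^ n := by
    rw [Finset.prod_pow_eq_pow_sum, ← h1]; rfl
  simp only [Pi.smul_apply, smul_eq_mul, mul_pow, Finset.prod_mul_distrib]
  rw [h2]; ring

lemma restr_coeff {f : MvPolynomial (Fin 3) F} {n : ℕ} (h : f.IsHomogeneous n)
    (A B : Fin 3 → F) : (restr A B f).coeff n = MvPolynomial.eval B f := by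
  rw [restr, aeval_eq_eval₂Hom, coe_eval₂Hom, eval₂_eq, eval_eq, Polynomial.finsetSum_coeff]
  apply Finset.sum_congr rfl
  intro s hs
  have h1 : s.degree = n := by
    by_contra hne
    exact (mem_support_iff.mp hs) (h.coeff_eq_zero hne)
  rw [← Polynomial.C_eq_algebraMap, Polynomial.coeff_C_mul]
  congr 1
  have hp : ∀ i, ((Polynomial.C (A i) + Polynomial.X * Polynomial.C (B i)) ^ s i).natDegree
      ≤ s i := by
    intro i
    refine (Polynomial.natDegree_pow_le).trans ?_
    refine (Nat.mul_le_mul_left _ (m := 1) ?_).trans (by simp)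
    compute_degree
  have hc : ∀ i, ((Polynomial.C (A i) + Polynomial.X * Polynomial.C (B i)) ^ s i).coeff (s i)
      = B i ^ s i := by
    intro i
    have := Polynomial.coeff_pow_of_natDegree_le
      (p := (Polynomial.C (A i) + Polynomial.X * Polynomial.C (B i))) (m := s i) (n := 1)
      (by compute_degree)
    simpa using this
  have h3 : n = ∑ i ∈ s.support, s i := by rw [← h1]; rfl
  rw [h3]
  clear h3 h1 hs
  induction s.support using Finset.induction_on with
  | empty => simp
  | insert i t hi ih =>
    rw [Finset.prod_insert hi, Finset.prod_insert hi, Finset.sum_insert hi,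
      Polynomial.coeff_mul_add_eq_of_natDegree_le (hp i) ?_, ih, hc]
    refine (Polynomial.natDegree_prod_le _ _).trans (Finset.sum_le_sum fun i _ => hp i)

lemma exists_tangent {f : MvPolynomial (Fin 3) F} {n : ℕ} (hf : f.IsHomogeneous n)
    {A : Fin 3 → F} (hA : A ≠ 0) (hfA : MvPolynomial.eval A f = 0) :
    ∃ B, LinearIndependent F ![A, B] ∧ Polynomial.X ^ 2 ∣ restr A B f := by
  let φ : (Fin 3 → F) →ₗ[F] F :=
    Fintype.linearCombination F (fun i => MvPolynomial.eval A (pderiv i f))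
  have hφA : φ A = 0 := by
    have := congrArg (MvPolynomial.eval A) hf.sum_X_mul_pderiv
    simpa [φ, Fintype.linearCombination_apply, hfA] using this
  have hk : ¬ LinearMap.ker φ ≤ Submodule.span F {A} := by
    intro hle
    have h1 := Submodule.finrank_mono hle
    rw [finrank_span_singleton hA] at h1
    have h2 := LinearMap.finrank_range_add_finrank_ker φ
    have h3 : Module.finrank F (LinearMap.range φ) ≤ 1 := by
      simpa using Submodule.finrank_le (LinearMap.range φ)
    simp at h2
    omega
  obtain ⟨B, hB, hBA⟩ := SetLike.not_le_iff_exists.mp hk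
  refine ⟨B, ?_, ?_⟩
  · rw [LinearIndependent.pair_iff' hA]
    intro a ha
    exact hBA (Submodule.mem_span_singleton.mpr ⟨a, ha⟩)
  · rw [Polynomial.X_pow_dvd_iff]
    intro k hk
    interval_cases k
    · rw [Polynomial.coeff_zero_eq_eval_zero, restr_eval]
      simpa using hfA
    · have h1 := Polynomial.coeff_derivative (restr A B f) 0
      simp only [zero_add, Nat.cast_zero, mul_one] at h1
      rw [← h1, restr_derivative, Polynomial.coeff_zero_eq_eval_zero, Polynomial.eval_finsetSum]
      have : φ B = 0 := hB
      simpa [φ, Fintype.linearCombination_apply, restr_eval] using this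

lemma finite_proj [Fintype F] : Finite (Projectivization F (Fin 3 → F)) := inferInstance

lemma coprime_lin {a b : F} (ha : a ≠ 0) :
    IsCoprime (Polynomial.X : Polynomial F) (Polynomial.C a + Polynomial.X * Polynomial.C b) := by
  refine ⟨-(Polynomial.C b * Polynomial.C a⁻¹), Polynomial.C a⁻¹, ?_⟩
  have : Polynomial.C a⁻¹ * Polynomial.C a = (1 : Polynomial F) := by
    rw [← Polynomial.C_mul, inv_mul_cancel₀ ha, Polynomial.C_1]
  linear_combination this

lemma caseA [Fintype F] {f : MvPolynomial (Fin 3) F} {q : ℕ} (hf : f.IsHomogeneous (q + 1))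
    (hq : (q : F) = 0) (hirr : Irreducible f) (hfg : ¬ f ∣ svPoly (Fintype.card F) f) :
    2 * (hypersurfacePts f).ncard ≤ (q + 1) * (Fintype.card F + q) := by
  classical
  let ι := hypersurfacePts f
  have : Fintype ι := Fintype.ofFinite _
  have hcard : (hypersurfacePts f).ncard = Fintype.card ι := by
    rw [← Nat.card_coe_set_eq, Nat.card_eq_fintype_card]
  have key : ∀ P : ι, ∃ B, LinearIndependent F ![P.1.rep, B] ∧
      Polynomial.X ^ 2 ∣ restr P.1.rep B f := fun P =>
    exists_tangent hf P.1.rep_nonzero P.2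
  choose B hB hBf using key
  have key2 : ∀ P P' : ι, ∃ φ : (Fin 3 → F) →ₗ[F] F, P' ≠ P →
      φ P'.1.rep = 0 ∧ φ P.1.rep ≠ 0 := by
    intro P P'
    by_cases hne : P' = P
    · exact ⟨0, fun h => absurd hne h⟩
    have hnot : P.1.rep ∉ Submodule.span F {P'.1.rep} := by
      intro hmem
      obtain ⟨a, ha⟩ := Submodule.mem_span_singleton.mp hmem
      apply hne
      apply Subtype.ext
      have := (Projectivization.mk_eq_mk_iff' F P.1.rep P'.1.rep P.1.rep_nonzero
        P'.1.rep_nonzero).mpr ⟨a, ha⟩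
      simpa using this.symm
    obtain ⟨φ, h1, h2⟩ := Submodule.exists_le_ker_of_notMem hnot
    exact ⟨φ, fun _ => ⟨h2 (Submodule.mem_span_singleton_self _), h1⟩⟩
  choose ℓ hℓ using key2
  let E : ι → MvPolynomial (Fin 3) F := fun P =>
    ∏ P' ∈ Finset.univ.erase P, linForm (ℓ P P') ^ 2
  have hmain := count_le (ι := ι) (r := (Fintype.card ι - 1) * 2) hf
    (svPoly_hom hf (Fintype.card F)) hirr hfg
    (fun P => P.1.rep) B hB (fun _ => Polynomial.X ^ 2) (fun _ => by simp) hBf ?_ E ?_ ?_ ?_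
  · simp at hmain
    rw [hcard]
    linarith
  · intro P
    rw [restr_svPoly _ _ _ _ hf hq]
    apply dvd_add (hBf P)
    rw [pow_two]
    apply mul_dvd_mul
    · apply dvd_sub _ dvd_rfl
      exact dvd_pow_self _ Fintype.card_ne_zero
    · obtain ⟨c, hc⟩ := hBf P
      rw [hc]
      simp only [Polynomial.derivative_mul, Polynomial.derivative_X_pow]
      refine ⟨Polynomial.C 2 * c + Polynomial.X * Polynomial.derivative c, ?_⟩
      simp
      ring
  · intro P
    have := IsHomogeneous.prod (Finset.univ.erase P) (fun P' => linForm (ℓ P P') ^ 2)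
      (fun _ => 2) (fun P' _ => by simpa using (linForm_hom (ℓ P P')).pow 2)
    simpa using this
  · intro P P' hne
    simp only [E, map_prod, map_pow]
    refine dvd_trans ?_ (Finset.dvd_prod_of_mem _ (Finset.mem_erase.mpr ⟨hne, Finset.mem_univ _⟩))
    apply pow_dvd_pow_of_dvd
    rw [restr_linForm, (hℓ P P' hne).1]
    simp
  · intro P
    simp only [E, map_prod, map_pow]
    apply IsCoprime.prod_right
    intro P' hP'
    apply IsCoprime.pow
    rw [restr_linForm]
    exact coprime_lin (hℓ P P' (Finset.ne_of_mem_erase hP')).2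

lemma deg_le_roots [Fintype F] [DecidableEq F] {p h a b : Polynomial F} (hp : p ≠ 0)
    (hhp : h ∣ p) (hhp' : h ∣ Polynomial.derivative p)
    (hg : h = p * a + Polynomial.derivative p * b)
    (hdvd : p ∣ (Polynomial.X ^ Fintype.card F - Polynomial.X) * Polynomial.derivative p) :
    p.natDegree ≤ h.natDegree + p.roots.toFinset.card := by
  obtain ⟨u, hu⟩ := hhp
  obtain ⟨w, hw⟩ := hhp'
  have hh0 : h ≠ 0 := by rintro rfl; simp at hu; exact hp hu
  have hu0 : u ≠ 0 := by rintro rfl; simp at hu; exact hp hu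
  have hcop : IsCoprime u w := by
    refine ⟨a, b, ?_⟩
    apply mul_left_cancel₀ hh0
    linear_combination -hg - a * hu - b * hw
  have hu1 : u ∣ Polynomial.X ^ Fintype.card F - Polynomial.X := by
    apply hcop.dvd_of_dvd_mul_right
    obtain ⟨c, hc⟩ := hdvd
    refine ⟨c, mul_left_cancel₀ hh0 ?_⟩
    linear_combination hc - (Polynomial.X ^ Fintype.card F - Polynomial.X) * hw + c * hu
  have hX0 : (Polynomial.X ^ Fintype.card F - Polynomial.X : Polynomial F) ≠ 0 :=
    FiniteField.X_pow_card_sub_X_ne_zero F Fintype.one_lt_card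
  have hsp : (Polynomial.X ^ Fintype.card F - Polynomial.X : Polynomial F).Splits := by
    rw [Polynomial.splits_iff_card_roots, FiniteField.roots_X_pow_card_sub_X,
      FiniteField.X_pow_card_sub_X_natDegree_eq F Fintype.one_lt_card]
    simp
  have hus := Polynomial.Splits.of_dvd hsp hX0 hu1
  have hnd : u.roots.Nodup := by
    refine Multiset.nodup_of_le (Polynomial.roots.le_of_dvd hX0 hu1) ?_
    rw [FiniteField.roots_X_pow_card_sub_X]
    exact Finset.univ.nodup
  have hd : u.natDegree = u.roots.toFinset.card := by
    rw [Multiset.toFinset_card_of_nodup hnd, Polynomial.splits_iff_card_roots.mp hus]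
  have hsub : u.roots.toFinset ⊆ p.roots.toFinset := by
    apply Multiset.toFinset_subset.mpr
    apply Multiset.subset_of_le
    exact Polynomial.roots.le_of_dvd hp ⟨h, by rw [hu]; ring⟩
  have h1 := Finset.card_le_card hsub
  have h2 : p.natDegree = h.natDegree + u.natDegree := by
    conv_lhs => rw [hu]
    exact Polynomial.natDegree_mul hh0 hu0
  omega

lemma exists_frame {P : Fin 3 → F} (hP : P ≠ 0) :
    ∃ (e₁ e₂ : Fin 3 → F) (x y : (Fin 3 → F) →ₗ[F] F), x e₁ = 1 ∧ x e₂ = 0 ∧ x P = 0 ∧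
      y e₁ = 0 ∧ y e₂ = 1 ∧ y P = 0 := by
  let W := Submodule.span F {P}
  have hfr : Module.finrank F ((Fin 3 → F) ⧸ W) = 2 := by
    have h1 := Submodule.finrank_quotient_add_finrank W
    rw [finrank_span_singleton hP] at h1
    simp at h1
    omega
  let b := Module.finBasisOfFinrankEq F _ hfr
  obtain ⟨e₁, he₁⟩ := W.mkQ_surjective (b 0)
  obtain ⟨e₂, he₂⟩ := W.mkQ_surjective (b 1)
  have hPW : W.mkQ P = 0 := by
    rw [← LinearMap.mem_ker, Submodule.ker_mkQ]
    exact Submodule.mem_span_singleton_self P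
  refine ⟨e₁, e₂, b.coord 0 ∘ₗ W.mkQ, b.coord 1 ∘ₗ W.mkQ, ?_⟩
  simp only [LinearMap.comp_apply, he₁, he₂, hPW, map_zero, Module.Basis.coord_apply,
    Module.Basis.repr_self]
  simp

lemma caseB [Fintype F] {f : MvPolynomial (Fin 3) F} {q : ℕ} (hf : f.IsHomogeneous (q + 1))
    (hq : (q : F) = 0) (hirr : Irreducible f) (hfg : f ∣ svPoly (Fintype.card F) f)
    {P : Fin 3 → F} (hP : MvPolynomial.eval P f ≠ 0) :
    (q + 1) * (Fintype.card F + 1) ≤ (hypersurfacePts f).ncard + (q + 1) * q := by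
  classical
  have hP0 : P ≠ 0 := by
    rintro rfl
    apply hP
    have := eval_smul_hom hf 0 (0 : Fin 3 → F)
    simpa using this
  obtain ⟨e₁, e₂, x, y, hx1, hx2, hxP, hy1, hy2, hyP⟩ := exists_frame hP0
  let A : Option F → Fin 3 → F := fun o => o.elim e₂ (fun a => e₁ + a • e₂)
  let L : Option F → (Fin 3 → F) →ₗ[F] F := fun o => o.elim x (fun a => y - a • x)
  have hLP : ∀ k, L k P = 0 := by
    rintro (_ | a) <;> simp [L, hxP, hyP]
  have hLA : ∀ k, L k (A k) = 0 := by
    rintro (_ | a) <;> simp [L, A, hx1, hx2, hy1, hy2]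
  have hLne : ∀ i k, k ≠ i → L k (A i) ≠ 0 := by
    rintro (_ | a) (_ | b) hne
    · exact absurd rfl hne
    · simp [L, A, hx2, hy2]
    · simp [L, A, hx1, hx2]
    · simp only [L, A, Option.elim, LinearMap.sub_apply, LinearMap.smul_apply, map_add, map_smul,
        hx1, hx2, hy1, hy2, smul_eq_mul, mul_one, mul_zero]
      intro h
      apply hne
      have hba : b = a := by linear_combination -h
      rw [hba]
  have hAB : ∀ i, LinearIndependent F ![A i, P] := by
    intro i
    obtain ⟨k, hk⟩ : ∃ k, k ≠ i := exists_ne i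
    rw [LinearIndependent.pair_iff]
    intro s t hst
    have h1 := congrArg (L k) hst
    simp only [map_add, map_smul, hLP, smul_eq_mul, mul_zero, add_zero, map_zero] at h1
    have hs : s = 0 := (mul_eq_zero.mp h1).resolve_right (hLne i k hk)
    subst hs
    simp only [zero_smul, zero_add] at hst
    exact ⟨rfl, (smul_eq_zero.mp hst).resolve_right hP0⟩
  let φ : Option F → Polynomial F := fun i => restr (A i) P f
  have hφ0 : ∀ i, φ i ≠ 0 := by
    intro i h
    apply hP
    rw [← restr_coeff hf (A i) P]
    change (φ i).coeff _ = 0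
    rw [h, Polynomial.coeff_zero]
  have hφdeg : ∀ i, q + 1 ≤ (φ i).natDegree := by
    intro i
    apply Polynomial.le_natDegree_of_ne_zero
    rw [restr_coeff hf]
    exact hP
  let g : MvPolynomial (Fin 3) F := ∑ i, C (P i) * pderiv i f
  have hg : g.IsHomogeneous q := by
    apply IsHomogeneous.sum
    intro i _
    simpa using (isHomogeneous_C (Fin 3) (P i)).mul (hf.pderiv (i := i))
  have hgr : ∀ i, restr (A i) P g = Polynomial.derivative (φ i) := by
    intro i
    rw [restr_derivative]
    simp only [g, map_sum, map_mul, restr_C]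
  have hgP : MvPolynomial.eval P g = MvPolynomial.eval P f := by
    have := congrArg (MvPolynomial.eval P) hf.sum_X_mul_pderiv
    simpa [g, hq] using this
  have hg0 : g ≠ 0 := by
    intro h
    apply hP
    rw [← hgP, h, map_zero]
  have hng : ¬ f ∣ g := by
    intro hd
    have h1 := totalDegree_le_of_dvd_of_isDomain hd hg0
    rw [hf.totalDegree hirr.ne_zero, hg.totalDegree hg0] at h1
    omega
  let h : Option F → Polynomial F := fun i =>
    EuclideanDomain.gcd (φ i) (Polynomial.derivative (φ i))
  have hh1 : ∀ i, h i ∣ φ i := fun i => EuclideanDomain.gcd_dvd_left _ _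
  have hh2 : ∀ i, h i ∣ Polynomial.derivative (φ i) := fun i => EuclideanDomain.gcd_dvd_right _ _
  have hh0 : ∀ i, h i ≠ 0 := fun i hi => hφ0 i (by
    have := hh1 i
    rw [hi] at this
    exact zero_dvd_iff.mp this)
  let E : Option F → MvPolynomial (Fin 3) F := fun i =>
    ∏ k ∈ Finset.univ.erase i, linForm (L k)
  have hcount : ∑ i, (h i).natDegree ≤ (q + 1) * q := by
    refine count_le (r := Fintype.card F) hf hg hirr hng A (fun _ => P) hAB h hh0 hh1
      (fun i => by rw [hgr]; exact hh2 i) E ?_ ?_ ?_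
    · intro i
      have := IsHomogeneous.prod (Finset.univ.erase i) (fun k => linForm (L k))
        (fun _ => 1) (fun k _ => linForm_hom (L k))
      simpa using this
    · intro i k hk
      have : restr (A k) P (E i) = 0 := by
        simp only [E, map_prod]
        apply Finset.prod_eq_zero (Finset.mem_erase.mpr ⟨hk, Finset.mem_univ _⟩)
        rw [restr_linForm, hLA, hLP]
        simp
      rw [this]
      exact dvd_zero _
    · intro i
      simp only [E, map_prod]
      apply IsCoprime.prod_right
      intro k hk
      rw [restr_linForm, hLP]
      simp only [map_zero, mul_zero, add_zero]
      refine isCoprime_one_right.of_isCoprime_of_dvd_right (IsUnit.dvd ?_)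
      rw [Polynomial.isUnit_C]
      exact (hLne i k (Finset.ne_of_mem_erase hk)).isUnit
  have hroots : ∀ i, q + 1 ≤ (h i).natDegree + (φ i).roots.toFinset.card := by
    intro i
    refine (hφdeg i).trans (deg_le_roots (hφ0 i) (hh1 i) (hh2 i)
      (EuclideanDomain.gcd_eq_gcd_ab _ _) ?_)
    have h1 := map_dvd (restr (A i) P) hfg
    rw [restr_svPoly _ _ _ _ hf hq] at h1
    exact (dvd_add_right dvd_rfl).mp h1
  have hne0 : ∀ i (t : F), A i + t • P ≠ 0 := by
    intro i t h0
    have := LinearIndependent.pair_iff.mp (hAB i) 1 t (by simpa using h0)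
    exact one_ne_zero this.1
  have : Fintype (hypersurfacePts f) := Fintype.ofFinite _
  have hpts : ∑ i, (φ i).roots.toFinset.card ≤ (hypersurfacePts f).ncard := by
    rw [← Nat.card_coe_set_eq, Nat.card_eq_fintype_card]
    have hS : Fintype.card (Σ i, ((φ i).roots.toFinset : Finset F)) =
        ∑ i, (φ i).roots.toFinset.card := by
      rw [Fintype.card_sigma]
      exact Finset.sum_congr rfl fun i _ => Fintype.card_coe _
    rw [← hS]
    have hmem : ∀ s : (Σ i, ((φ i).roots.toFinset : Finset F)),
        Projectivization.mk F (A s.1 + s.2.1 • P) (hne0 _ _) ∈ hypersurfacePts f := by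
      rintro ⟨i, t, ht⟩
      change MvPolynomial.eval _ f = 0
      obtain ⟨c, hc⟩ := Projectivization.exists_smul_eq_mk_rep F (A i + t • P) (hne0 _ _)
      rw [← hc]
      change MvPolynomial.eval ((c : F) • (A i + t • P)) f = 0
      rw [eval_smul_hom hf, ← restr_eval]
      have : (φ i).IsRoot t := by
        rw [Multiset.mem_toFinset] at ht
        exact Polynomial.isRoot_of_mem_roots ht
      have h2 : (restr (A i) P f).eval t = 0 := this
      rw [h2, mul_zero]
    refine Fintype.card_le_of_injective (fun s => ⟨_, hmem s⟩) ?_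
    rintro ⟨i, t, ht⟩ ⟨j, s, hs⟩ heq
    have heq' := congrArg Subtype.val heq
    simp only at heq'
    rw [Projectivization.mk_eq_mk_iff'] at heq'
    obtain ⟨c, hc⟩ := heq'
    have hij : j = i := by
      by_contra hne
      apply hLne i j hne
      have := congrArg (L j) hc
      simp only [map_add, map_smul, hLP, hLA, smul_zero, add_zero] at this
      exact this.symm
    subst hij
    obtain ⟨m, τ, h1, h2, h3, h4⟩ := exists_dual_pair (hAB j)
    have c1 := congrArg m hc
    have c2 := congrArg τ hc
    simp only [map_add, map_smul, h1, h2, h3, h4, smul_eq_mul, mul_one, mul_zero, add_zero,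
      zero_add] at c1 c2
    rw [c1, one_mul] at c2
    subst c2
    rfl
  have hsum : ∑ _i : Option F, (q + 1) ≤
      ∑ i, ((h i).natDegree + (φ i).roots.toFinset.card) :=
    Finset.sum_le_sum fun i _ => hroots i
  rw [Finset.sum_const, Finset.card_univ, Fintype.card_option, smul_eq_mul,
    Finset.sum_add_distrib] at hsum
  nlinarith

lemma irr_of_map {f : MvPolynomial (Fin 3) F}
    (h : Irreducible (MvPolynomial.map (algebraMap F (AlgebraicClosure F)) f)) :
    Irreducible f := by
  have hinj := (algebraMap F (AlgebraicClosure F)).injective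
  have : IsLocalHom (MvPolynomial.map (σ := Fin 3) (algebraMap F (AlgebraicClosure F))) := by
    constructor
    intro a ha
    rw [isUnit_iff_totalDegree_of_isReduced] at ha ⊢
    have hdeg : (MvPolynomial.map (algebraMap F (AlgebraicClosure F)) a).totalDegree =
        a.totalDegree := by
      rw [totalDegree, totalDegree, support_map_of_injective _ hinj]
    rw [coeff_map, hdeg] at ha
    refine ⟨?_, ha.2⟩
    have := ha.1.ne_zero
    rw [isUnit_iff_ne_zero]
    rintro h0
    rw [h0, map_zero] at this
    exact this rfl
  exact Irreducible.of_map (f := MvPolynomial.map (σ := Fin 3) (algebraMap F (AlgebraicClosure F))) h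

end CurveHelpers

/-- If `q` is a prime power and `C` is an absolutely irreducible plane curve of degree
`q+1` defined over `GF(q²)` whose number `N` of `GF(q²)`-rational points satisfies
`N < q³ + 1`, then `N ≤ q(q+1)²/2`. -/
theorem stmt_7 (q : ℕ) (hq : ∃ p k : ℕ, p.Prime ∧ 0 < k ∧ q = p ^ k)
    (F : Type) [Field F] [Fintype F] (hcardF : Fintype.card F = q ^ 2)
    (f : MvPolynomial (Fin 3) F) (hfdeg : f.IsHomogeneous (q + 1))
    (habsirr : Irreducible
      (MvPolynomial.map (algebraMap F (AlgebraicClosure F)) f))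
    (N : ℕ) (hN : N = (hypersurfacePts f).ncard) (hlt : N < q ^ 3 + 1) :
    (N : ℚ) ≤ (q : ℚ) * ((q : ℚ) + 1) ^ 2 / 2 := by
  have hirr := irr_of_map habsirr
  obtain ⟨p, k, hp, hk, rfl⟩ := hq
  have hq0 : ((p ^ k : ℕ) : F) = 0 := by
    have h1 : ((Fintype.card F : ℕ) : F) = 0 := Nat.cast_card_eq_zero F
    rw [hcardF] at h1
    push_cast at h1 ⊢
    exact pow_eq_zero_iff (two_ne_zero) |>.mp h1
  have hq2 : 2 ≤ p ^ k := hp.two_le.trans (Nat.le_self_pow hk.ne' p)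
  generalize p ^ k = q at *
  by_cases hdvd : f ∣ svPoly (Fintype.card F) f
  · exfalso
    have hex : ∃ P : Projectivization F (Fin 3 → F), MvPolynomial.eval P.rep f ≠ 0 := by
      by_contra hall
      push Not at hall
      have huniv : hypersurfacePts f = Set.univ := Set.eq_univ_of_forall hall
      rw [huniv, Set.ncard_univ] at hN
      have hc := Projectivization.card_of_finrank F (Fin 3 → F) (n := 3) (by simp)
      simp only [Finset.sum_range_succ, Finset.sum_range_zero, Nat.card_eq_fintype_card,
        hcardF] at hc
      nlinarith [pow_pos (show 0 < q by omega) 3]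
    obtain ⟨P, hP⟩ := hex
    have := caseB hfdeg hq0 hirr hdvd hP
    rw [hcardF, ← hN] at this
    nlinarith
  · have := caseA hfdeg hq0 hirr hdvd
    rw [hcardF, ← hN] at this
    have h2 : (2 * N : ℚ) ≤ (q + 1) * (q ^ 2 + q) := by exact_mod_cast this
    linarith
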